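/- (Uniform bounds for the labelled, δ-weighted creation and annihilation operators.) Let d ≥ 3 and δ ∈ [0, (d−2)/2). Define, for 1 ≤ i < i' ≤ n+1, the operator A^{ε,δ}_+[(i,i')] : L²_n → L²_{n+1} by (A^{ε,δ}_+[(i,i')]f)(k_{1:n+1}) := ε^{d/2} |2 ε^{-1} (w·(k_i+k_{i'}))/(2π)^{d/2}|^{1+δ} J^ε_{k_i,k_{i'}} f(k_i+k_{i'}, k_{{1:n+1}∖{i,i'}}), and for 1 ≤ q ≤ n−1 the operator A^{ε,δ}_−[q] : L²_n → L²_{n−1} by (A^{ε,δ}_−[q]f)(k_{1:n−1}) := ε^{d/2} |2 ε^{-1} (w·k_q)/(2π)^{d/2}|^{1+δ} Σ_{ℓ,m ∈ ℤ^d₀, ℓ+m=k_q} J^ε_{ℓ,m} f(ℓ, m, k_{{1:n−1}∖{q}}); set T^{ε,δ,+}[(i,i')] := (−L₀)^{−(1+δ)/2} A^{ε,δ}_+[(i,i')] (−L₀)^{−(1+δ)/2} and T^{ε,δ,−}[q] := (−L₀)^{−(1+δ)/2} A^{ε,δ}_−[q] (−L₀)^{−(1+δ)/2}. Then there exists C =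 C(d, δ) > 0, independent of ε, n and the indices i, i', q, such that for every f ∈ L²_n: ‖T^{ε,δ,+}[(i,i')] f‖_{L²_{n+1}} ≤ C ‖f‖_{L²_n} and ‖T^{ε,δ,−}[q] f‖_{L²_{n−1}} ≤ C ‖f‖_{L²_n}. -/

import Mathlib

open scoped BigOperators
open scoped Classical

noncomputable section

namespace SBE

/-- Lattice points of `ℤ^d`. -/
abbrev ZLat (d : ℕ) := Fin d → ℤ

/-- Kernels of the `n`-th chaos: functions on `n`-tuples of lattice points. -/
abbrev Chaos (d n : ℕ) := (Fin n → ZLat d) → ℂ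

/-- Squared Euclidean norm of a lattice point. -/
def nsq {d : ℕ} (k : ZLat d) : ℝ := ∑ i, ((k i : ℝ))^2

/-- Euclidean norm of a lattice point. -/
def eN {d : ℕ} (k : ZLat d) : ℝ := Real.sqrt (nsq k)

/-- Supremum norm of a lattice point. -/
def sN {d : ℕ} (k : ZLat d) : ℝ := ((Finset.univ.sup fun i => (k i).natAbs : ℕ) : ℝ)

/-- The norm used in the Fourier cutoff: Euclidean if `d = 2`, supremum otherwise. -/
def cutNorm (d : ℕ) (k : ZLat d) : ℝ := if d = 2 then eN k else sN k

/-- `w · k`. -/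
def dotw {d : ℕ} (w : Fin d → ℝ) (k : ZLat d) : ℝ := ∑ i, w i * (k i : ℝ)

/-- `|k_{1:n}|² = Σ_i |k_i|²`. -/
def wSq {d n : ℕ} (k : Fin n → ZLat d) : ℝ := ∑ a, nsq (k a)

/-- The coupling constant `λ_ε`. -/
def lam (d : ℕ) (ε : ℝ) : ℝ :=
  if d = 2 then (Real.sqrt (Real.log (1 / ε^2)))⁻¹ else ε ^ ((d:ℝ)/2 - 1)

/-- The Fourier cutoff indicator `J^ε_{ℓ,m}`. -/
def Jind (d : ℕ) (ε : ℝ) (l m : ZLat d) : ℝ :=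
  if 0 < ε * cutNorm d l ∧ ε * cutNorm d l ≤ 1 ∧
     0 < ε * cutNorm d m ∧ ε * cutNorm d m ≤ 1 ∧
     0 < ε * cutNorm d (l + m) ∧ ε * cutNorm d (l + m) ≤ 1 then 1 else 0

/-- Symmetry of a kernel under permutation of its arguments. -/
def Symm {d n : ℕ} (f : Chaos d n) : Prop :=
  ∀ (σ : Equiv.Perm (Fin n)) (k : Fin n → ZLat d), f (k ∘ σ) = f k

/-- A kernel vanishes whenever one of its arguments is the zero frequency
(i.e. it is really a function on `(ℤ^d_0)^n`). -/
def SuppOk {d n : ℕ} (f : Chaos d n) : Prop :=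
  ∀ k : Fin n → ZLat d, (∃ a, k a = 0) → f k = 0

/-- Summand of `‖(-L₀)^s f‖²`. -/
def sobTerm {d n : ℕ} (s : ℝ) (f : Chaos d n) (k : Fin n → ZLat d) : ℝ :=
  (wSq k / 2) ^ (2*s) * ‖f k‖^2

/-- `‖(-L₀)^s f‖² = n! Σ_k (|k_{1:n}|²/2)^{2s} |f(k)|²`. -/
def sobSq {d n : ℕ} (s : ℝ) (f : Chaos d n) : ℝ := (n.factorial : ℝ) * ∑' k, sobTerm s f k

/-- Remove the entries `i < j` from an `(n+2)`-tuple (order preservingly). -/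
def remove2 {X : Type*} {n : ℕ} (k : Fin (n+2) → X) (i j : Fin (n+2)) (h : i < j) :
    Fin n → X :=
  fun a => k (j.succAbove ((Fin.castLT i
    (Nat.lt_of_lt_of_le (Fin.lt_def.mp h) (Nat.lt_succ_iff.mp j.isLt))).succAbove a))

/-- The operator `A⁺_ε : ΓL²_{n+1} → ΓL²_{n+2}`. -/
def Aplus (d : ℕ) (w : Fin d → ℝ) (ε : ℝ) {n : ℕ} (f : Chaos d (n+1)) : Chaos d (n+2) :=
  fun k => -(2 * Complex.I / (((2*Real.pi) ^ ((d:ℝ)/2) : ℝ) : ℂ)) *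
      ((lam d ε / ((n:ℝ)+2) : ℝ) : ℂ) *
    ∑ i : Fin (n+2), ∑ j : Fin (n+2),
      if h : i < j then
        ((dotw w (k i + k j) : ℝ) : ℂ) * ((Jind d ε (k i) (k j) : ℝ) : ℂ) *
          f (Fin.cons (k i + k j) (remove2 k i j h))
      else 0

/-- The operator `A⁻_ε : ΓL²_{n+2} → ΓL²_{n+1}`. -/
def Aminus (d : ℕ) (w : Fin d → ℝ) (ε : ℝ) {n : ℕ} (f : Chaos d (n+2)) : Chaos d (n+1) :=
  fun k => (2 * Complex.I / (((2*Real.pi) ^ ((d:ℝ)/2) : ℝ) : ℂ)) *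
      ((((n:ℝ)+2) * lam d ε : ℝ) : ℂ) *
    ∑ j : Fin (n+1), ((dotw w (k j) : ℝ) : ℂ) *
      ∑' l : ZLat d, ((Jind d ε l (k j - l) : ℝ) : ℂ) *
        f (Fin.cons l (Fin.cons (k j - l) (fun a => k (j.succAbove a))))

/-- `L²` norm squared (no factorial): `Σ_k |f(k)|²`. -/
def l2Sq {d n : ℕ} (f : Chaos d n) : ℝ := ∑' k, ‖f k‖^2

/-- Diagonal operator `(−L₀)^s`, multiplying the kernel at `k` by `(|k_{1:n}|²/2)^s`. -/
def negPow {d n : ℕ} (s : ℝ) (f : Chaos d n) : Chaos d n :=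
  fun k => (((wSq k / 2) ^ s : ℝ) : ℂ) * f k

/-- The labelled creation operator `A⁺_ε[(i,j)] : L²_{n+1} → L²_{n+2}`. -/
def AplusL (d : ℕ) (w : Fin d → ℝ) (ε : ℝ) {n : ℕ} (i j : Fin (n+2)) (h : i < j)
    (f : Chaos d (n+1)) : Chaos d (n+2) :=
  fun k => -((2 * Complex.I * ((ε ^ ((d:ℝ)/2 - 1) : ℝ) : ℂ)) /
        (((2*Real.pi) ^ ((d:ℝ)/2) : ℝ) : ℂ)) *
      ((dotw w (k i + k j) : ℝ) : ℂ) * ((Jind d ε (k i) (k j) : ℝ) : ℂ) *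
      f (Fin.cons (k i + k j) (remove2 k i j h))

/-- The labelled annihilation operator `A⁻_ε[q] : L²_{n+2} → L²_{n+1}`. -/
def AminusL (d : ℕ) (w : Fin d → ℝ) (ε : ℝ) {n : ℕ} (q : Fin (n+1))
    (f : Chaos d (n+2)) : Chaos d (n+1) :=
  fun k => ((2 * Complex.I * ((ε ^ ((d:ℝ)/2 - 1) : ℝ) : ℂ)) /
        (((2*Real.pi) ^ ((d:ℝ)/2) : ℝ) : ℂ)) *
      ((dotw w (k q) : ℝ) : ℂ) *
    ∑' l : ZLat d, ((Jind d ε l (k q - l) : ℝ) : ℂ) *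
      f (Fin.cons l (Fin.cons (k q - l) (fun a => k (q.succAbove a))))

/-- `T^{ε,+}[(i,j)] = (−L₀)^{−1/2} A⁺_ε[(i,j)] (−L₀)^{−1/2}`. -/
def TplusL (d : ℕ) (w : Fin d → ℝ) (ε : ℝ) {n : ℕ} (i j : Fin (n+2)) (h : i < j)
    (f : Chaos d (n+1)) : Chaos d (n+2) :=
  negPow (-(1/2)) (AplusL d w ε i j h (negPow (-(1/2)) f))

/-- `T^{ε,−}[q] = (−L₀)^{−1/2} A⁻_ε[q] (−L₀)^{−1/2}`. -/
def TminusL (d : ℕ) (w : Fin d → ℝ) (ε : ℝ) {n : ℕ} (q : Fin (n+1))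
    (f : Chaos d (n+2)) : Chaos d (n+1) :=
  negPow (-(1/2)) (AminusL d w ε q (negPow (-(1/2)) f))

/-- The `δ`-weighted labelled creation operator `A^{ε,δ}_+[(i,j)]`. -/
def AplusD (d : ℕ) (w : Fin d → ℝ) (ε δ : ℝ) {n : ℕ} (i j : Fin (n+2)) (h : i < j)
    (f : Chaos d (n+1)) : Chaos d (n+2) :=
  fun k => ((ε ^ ((d:ℝ)/2) *
      |2 * ε⁻¹ * dotw w (k i + k j) / (2*Real.pi) ^ ((d:ℝ)/2)| ^ (1+δ) *
      Jind d ε (k i) (k j) : ℝ) : ℂ) *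
    f (Fin.cons (k i + k j) (remove2 k i j h))

/-- The `δ`-weighted labelled annihilation operator `A^{ε,δ}_−[q]`. -/
def AminusD (d : ℕ) (w : Fin d → ℝ) (ε δ : ℝ) {n : ℕ} (q : Fin (n+1))
    (f : Chaos d (n+2)) : Chaos d (n+1) :=
  fun k => ((ε ^ ((d:ℝ)/2) *
      |2 * ε⁻¹ * dotw w (k q) / (2*Real.pi) ^ ((d:ℝ)/2)| ^ (1+δ) : ℝ) : ℂ) *
    ∑' l : ZLat d, ((Jind d ε l (k q - l) : ℝ) : ℂ) *
      f (Fin.cons l (Fin.cons (k q - l) (fun a => k (q.succAbove a))))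

/-- `T^{ε,δ,+}[(i,j)] = (−L₀)^{−(1+δ)/2} A^{ε,δ}_+[(i,j)] (−L₀)^{−(1+δ)/2}`. -/
def TplusD (d : ℕ) (w : Fin d → ℝ) (ε δ : ℝ) {n : ℕ} (i j : Fin (n+2)) (h : i < j)
    (f : Chaos d (n+1)) : Chaos d (n+2) :=
  negPow (-(1+δ)/2) (AplusD d w ε δ i j h (negPow (-(1+δ)/2) f))

/-- `T^{ε,δ,−}[q] = (−L₀)^{−(1+δ)/2} A^{ε,δ}_−[q] (−L₀)^{−(1+δ)/2}`. -/
def TminusD (d : ℕ) (w : Fin d → ℝ) (ε δ : ℝ) {n : ℕ} (q : Fin (n+1))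
    (f : Chaos d (n+2)) : Chaos d (n+1) :=
  negPow (-(1+δ)/2) (AminusD d w ε δ q (negPow (-(1+δ)/2) f))

/-!
Only the vertex where `ℓ` and `m` meet in `p = ℓ + m` matters. On the side of `p` one has
`|k_{1:n}|² ≥ |p|²`, which absorbs `|w·p|^{2(1+δ)}`; on the side of `ℓ` and `m` one has
`|k_{1:n}|² ≥ |ℓ|²`. Hence the squared kernel of `T^{ε,δ,±}` is at most a constant times
`ε^d |εℓ|^{-2(1+δ)}`, restricted to `0 < |εℓ|_∞ ≤ 1`, and the sum of this over `ℓ` is a Riemann sum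
of an integrable function because `2(1+δ) < d`. Creation then follows by dropping the relation
between the vertex and the merged configuration, annihilation by Cauchy–Schwarz in `ℓ`.

The Riemann sum is bounded through `|ℓ|^{-2a} ≤ ∏ᵢ max(|ℓᵢ|, 1)^{-2a/d}`, which reduces it to the
`d`-th power of a one-dimensional sum with exponent `2a/d < 1`.
-/

section LatticeSums

lemma one_sub_mul_add_one_rpow_neg_le {b x : ℝ} (hb0 : 0 ≤ b) (hb1 : b ≤ 1) (hx : 0 ≤ x) :
    (1 - b) * (x + 1) ^ (-b) ≤ (x + 1) ^ (1 - b) - x ^ (1 - b) := by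
  have hx1 : 0 < x + 1 := by positivity
  have bernoulli : (x / (x + 1)) ^ (1 - b) ≤ 1 + (1 - b) * -(x + 1)⁻¹ := by
    have h := rpow_one_add_le_one_add_mul_self (s := -(x + 1)⁻¹)
      (neg_le_neg (inv_le_one_of_one_le₀ (by linarith))) (sub_nonneg.2 hb1) (by linarith)
    rwa [show 1 + -(x + 1)⁻¹ = x / (x + 1) by field_simp; ring] at h
  rw [Real.div_rpow hx hx1.le, div_le_iff₀ (by positivity)] at bernoulli
  have hpow : (x + 1) ^ (-b) = (x + 1)⁻¹ * (x + 1) ^ (1 - b) := by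
    rw [← Real.rpow_neg_one, ← Real.rpow_add hx1]
    ring_nf
  rw [hpow]
  linarith

lemma sum_range_add_one_rpow_neg_le {b : ℝ} (hb0 : 0 ≤ b) (hb1 : b < 1) (N : ℕ) :
    ∑ m ∈ Finset.range N, ((m : ℝ) + 1) ^ (-b) ≤ (N : ℝ) ^ (1 - b) / (1 - b) := by
  have hb : 0 < 1 - b := sub_pos.2 hb1
  rw [le_div_iff₀' hb, Finset.mul_sum]
  calc ∑ m ∈ Finset.range N, (1 - b) * ((m : ℝ) + 1) ^ (-b)
      ≤ ∑ m ∈ Finset.range N, (((m + 1 : ℕ) : ℝ) ^ (1 - b) - (m : ℝ) ^ (1 - b)) := by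
        push_cast
        gcongr with m
        exact one_sub_mul_add_one_rpow_neg_le hb0 hb1.le m.cast_nonneg
    _ = (N : ℝ) ^ (1 - b) := by
        rw [Finset.sum_range_sub (fun m : ℕ => (m : ℝ) ^ (1 - b)), Nat.cast_zero,
          Real.zero_rpow hb.ne', sub_zero]

lemma sum_Icc_max_abs_one_rpow_neg_le {b : ℝ} (hb0 : 0 ≤ b) (hb1 : b < 1) {N : ℕ} (hN : 1 ≤ N) :
    ∑ m ∈ Finset.Icc (-(N : ℤ)) N, max |(m : ℝ)| 1 ^ (-b)
      ≤ (1 + 2 / (1 - b)) * (N : ℝ) ^ (1 - b) := by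
  have heven : (fun m : ℤ => max |(m : ℝ)| 1 ^ (-b)).Even := fun m => by simp
  have hterm (m : ℕ) : max |(((m + 1 : ℕ) : ℤ) : ℝ)| 1 = m + 1 := by
    push_cast
    rw [abs_of_nonneg (by positivity), max_eq_left (by simp)]
  have hsum : ∑ m ∈ Finset.Icc (-(N : ℤ)) N, max |(m : ℝ)| 1 ^ (-b)
      = 1 + 2 * ∑ m ∈ Finset.range N, ((m : ℝ) + 1) ^ (-b) := by
    rw [Finset.sum_Icc_of_even_eq_range heven, Finset.sum_range_succ']
    simp only [hterm, Nat.cast_zero, Int.cast_zero, abs_zero, zero_le_one, max_eq_right,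
      Real.one_rpow, nsmul_eq_mul, Nat.cast_ofNat]
    ring
  have hone : 1 ≤ (N : ℝ) ^ (1 - b) :=
    Real.one_le_rpow (by exact_mod_cast hN) (sub_nonneg.2 hb1.le)
  calc _ ≤ (N : ℝ) ^ (1 - b) + 2 * ((N : ℝ) ^ (1 - b) / (1 - b)) := by
        rw [hsum]
        gcongr
        exact sum_range_add_one_rpow_neg_le hb0 hb1 N
    _ = _ := by ring

variable {d : ℕ}

lemma nsq_nonneg (l : ZLat d) : 0 ≤ nsq l :=
  Finset.sum_nonneg fun _ _ => sq_nonneg _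

lemma sq_apply_le_nsq (l : ZLat d) (i : Fin d) : (l i : ℝ) ^ 2 ≤ nsq l :=
  Finset.single_le_sum (f := fun i => (l i : ℝ) ^ 2) (fun _ _ => sq_nonneg _) (Finset.mem_univ i)

lemma one_le_nsq {l : ZLat d} (hl : l ≠ 0) : 1 ≤ nsq l := by
  obtain ⟨i, hi⟩ := Function.ne_iff.mp hl
  have hi' : 1 ≤ l i ^ 2 := Order.one_le_iff_pos.2 (sq_pos_of_ne_zero hi)
  exact le_trans (by exact_mod_cast hi') (sq_apply_le_nsq l i)

lemma max_abs_one_sq_le_nsq {l : ZLat d} (hl : l ≠ 0) (i : Fin d) :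
    max |(l i : ℝ)| 1 ^ 2 ≤ nsq l := by
  rcases max_choice |(l i : ℝ)| 1 with h | h <;> rw [h]
  · rw [sq_abs]
    exact sq_apply_le_nsq l i
  · rw [one_pow]
    exact one_le_nsq hl

lemma nsq_rpow_neg_le_prod {a : ℝ} (ha : 0 ≤ a) {l : ZLat d} (hl : l ≠ 0) :
    nsq l ^ (-a) ≤ ∏ i, max |(l i : ℝ)| 1 ^ (-(2 * a / d)) := by
  obtain ⟨i₀, -⟩ := Function.ne_iff.mp hl
  have hd : (d : ℝ) ≠ 0 := Nat.cast_ne_zero.2 i₀.pos.ne'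
  have hnsq : 0 < nsq l := one_pos.trans_le (one_le_nsq hl)
  calc nsq l ^ (-a) = ∏ _i : Fin d, nsq l ^ (-(a / d)) := by
        rw [Finset.prod_const, Finset.card_univ, Fintype.card_fin, ← Real.rpow_mul_natCast hnsq.le]
        congr 1
        field_simp
    _ ≤ ∏ i, (max |(l i : ℝ)| 1 ^ 2) ^ (-(a / d)) := by
        refine Finset.prod_le_prod (fun _ _ => by positivity) fun i _ => ?_
        exact Real.rpow_le_rpow_of_nonpos (by positivity) (max_abs_one_sq_le_nsq hl i)
          (neg_nonpos.2 (by positivity))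
    _ = ∏ i, max |(l i : ℝ)| 1 ^ (-(2 * a / d)) := by
        refine Finset.prod_congr rfl fun i _ => ?_
        rw [← Real.rpow_natCast_mul (by positivity)]
        congr 1
        push_cast
        ring

/-- The nonzero lattice points of supremum norm at most `N`, the range of summation left by the
Fourier cutoff with `N = ⌊1/ε⌋`. -/
def puncturedCube (d N : ℕ) : Finset (ZLat d) :=
  (Fintype.piFinset fun _ => Finset.Icc (-(N : ℤ)) N).erase 0

lemma mem_puncturedCube {N : ℕ} {l : ZLat d} :
    l ∈ puncturedCube d N ↔ l ≠ 0 ∧ ∀ i, |l i| ≤ N := by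
  simp only [puncturedCube, Finset.mem_erase, Fintype.mem_piFinset, Finset.mem_Icc, abs_le]

lemma sum_puncturedCube_nsq_rpow_neg_le {a : ℝ} (ha : 0 ≤ a) (had : 2 * a < d) (N : ℕ) :
    ∑ l ∈ puncturedCube d N, nsq l ^ (-a)
      ≤ (1 + 2 / (1 - 2 * a / d)) ^ d * (N : ℝ) ^ ((d : ℝ) - 2 * a) := by
  have hd : (0 : ℝ) < d := by linarith
  set b := 2 * a / d with hb
  have hb1 : b < 1 := (div_lt_one hd).2 had
  have hb1' : 0 ≤ 1 - b := sub_nonneg.2 hb1.le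
  rcases N.eq_zero_or_pos with rfl | hN
  · have hempty : puncturedCube d 0 = ∅ := Finset.eq_empty_of_forall_notMem fun l hl =>
      (mem_puncturedCube.1 hl).1 (funext fun i => by simpa using (mem_puncturedCube.1 hl).2 i)
    rw [hempty, Finset.sum_empty]
    positivity
  calc ∑ l ∈ puncturedCube d N, nsq l ^ (-a)
      ≤ ∑ l ∈ puncturedCube d N, ∏ i, max |(l i : ℝ)| 1 ^ (-b) :=
        Finset.sum_le_sum fun l hl => nsq_rpow_neg_le_prod ha (mem_puncturedCube.1 hl).1
    _ ≤ ∑ l ∈ Fintype.piFinset fun _ : Fin d => Finset.Icc (-(N : ℤ)) N,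
          ∏ i, max |(l i : ℝ)| 1 ^ (-b) :=
        Finset.sum_le_sum_of_subset_of_nonneg (Finset.erase_subset _ _)
          fun _ _ _ => Finset.prod_nonneg fun _ _ => by positivity
    _ = (∑ m ∈ Finset.Icc (-(N : ℤ)) N, max |(m : ℝ)| 1 ^ (-b)) ^ d := by
        rw [Finset.sum_prod_piFinset _ fun (_ : Fin d) (m : ℤ) => max |(m : ℝ)| 1 ^ (-b),
          Finset.prod_const, Finset.card_univ, Fintype.card_fin]
    _ ≤ ((1 + 2 / (1 - b)) * (N : ℝ) ^ (1 - b)) ^ d := by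
        gcongr
        exact sum_Icc_max_abs_one_rpow_neg_le (by positivity) hb1 hN
    _ = (1 + 2 / (1 - b)) ^ d * (N : ℝ) ^ ((d : ℝ) - 2 * a) := by
        rw [mul_pow, ← Real.rpow_mul_natCast (by positivity)]
        congr 2
        rw [hb]
        field_simp

lemma rpow_mul_sum_puncturedCube_le {a : ℝ} (ha : 0 ≤ a) (had : 2 * a < d) {ε : ℝ} (hε : 0 < ε) :
    ε ^ ((d : ℝ) - 2 * a) * ∑ l ∈ puncturedCube d ⌊1 / ε⌋₊, nsq l ^ (-a)
      ≤ (1 + 2 / (1 - 2 * a / d)) ^ d := by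
  have hd : (0 : ℝ) < d := by linarith
  have hb : 0 ≤ 1 - 2 * a / d := sub_nonneg.2 ((div_lt_one hd).2 had).le
  have hscale : ε ^ ((d : ℝ) - 2 * a) * (⌊1 / ε⌋₊ : ℝ) ^ ((d : ℝ) - 2 * a) ≤ 1 := by
    rw [← Real.mul_rpow hε.le (Nat.cast_nonneg _)]
    refine Real.rpow_le_one (by positivity) ?_ (by linarith)
    exact (le_div_iff₀' hε).1 (Nat.floor_le (by positivity))
  calc _ ≤ ε ^ ((d : ℝ) - 2 * a) *
        ((1 + 2 / (1 - 2 * a / d)) ^ d * (⌊1 / ε⌋₊ : ℝ) ^ ((d : ℝ) - 2 * a)) := by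
        gcongr
        exact sum_puncturedCube_nsq_rpow_neg_le ha had _
    _ = (1 + 2 / (1 - 2 * a / d)) ^ d *
        (ε ^ ((d : ℝ) - 2 * a) * (⌊1 / ε⌋₊ : ℝ) ^ ((d : ℝ) - 2 * a)) := by ring
    _ ≤ _ := mul_le_of_le_one_right (by positivity) hscale

end LatticeSums

section L2Bounded

variable {𝕜 α β γ : Type*} [NormedField 𝕜]

/-- `T` maps `ℓ²(α)` into `ℓ²(β)` with operator norm at most `C`. The operator acts on arbitrary
functions, so square-summability of the image is part of the notion. -/
def L2Bounded (C : ℝ) (T : (α → 𝕜) → β → 𝕜) : Prop :=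
  ∀ f : α → 𝕜, Summable (fun a => ‖f a‖ ^ 2) →
    Summable (fun b => ‖T f b‖ ^ 2) ∧
      Real.sqrt (∑' b, ‖T f b‖ ^ 2) ≤ C * Real.sqrt (∑' a, ‖f a‖ ^ 2)

lemma L2Bounded.mono {C C' : ℝ} {T : (α → 𝕜) → β → 𝕜} (hT : L2Bounded C T) (h : C ≤ C') :
    L2Bounded C' T := fun f hf =>
  ⟨(hT f hf).1, (hT f hf).2.trans (mul_le_mul_of_nonneg_right h (Real.sqrt_nonneg _))⟩

lemma norm_tsum_mul_sq_le {c x : γ → 𝕜} {g : γ → ℝ} (hg : Summable g)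
    (hcg : ∀ l, ‖c l‖ ^ 2 ≤ g l) (hx : Summable fun l => ‖x l‖ ^ 2) :
    ‖∑' l, c l * x l‖ ^ 2 ≤ (∑' l, g l) * ∑' l, ‖x l‖ ^ 2 := by
  have hc : Summable fun l => ‖c l‖ ^ 2 := .of_nonneg_of_le (fun _ => sq_nonneg _) hcg hg
  obtain ⟨hcx, hle⟩ := Real.summable_and_inner_le_Lp_mul_Lq_tsum_of_nonneg .two_two
    (fun l => norm_nonneg (c l)) (fun l => norm_nonneg (x l))
    (by simpa only [Real.rpow_two] using hc) (by simpa only [Real.rpow_two] using hx)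
  simp only [Real.rpow_two, ← Real.sqrt_eq_rpow, ← norm_mul] at hcx hle
  calc ‖∑' l, c l * x l‖ ^ 2
      ≤ (Real.sqrt (∑' l, ‖c l‖ ^ 2) * Real.sqrt (∑' l, ‖x l‖ ^ 2)) ^ 2 := by
        gcongr
        exact (norm_tsum_le_tsum_norm hcx).trans hle
    _ = (∑' l, ‖c l‖ ^ 2) * ∑' l, ‖x l‖ ^ 2 := by
        rw [mul_pow, Real.sq_sqrt (tsum_nonneg fun _ => sq_nonneg _),
          Real.sq_sqrt (tsum_nonneg fun _ => sq_nonneg _)]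
    _ ≤ (∑' l, g l) * ∑' l, ‖x l‖ ^ 2 :=
        mul_le_mul_of_nonneg_right (hc.tsum_le_tsum hcg hg) (tsum_nonneg fun _ => sq_nonneg _)

lemma l2Bounded_sqrt_of_forall_le {B : ℝ} (hB : 0 ≤ B) {T : (α → 𝕜) → β → 𝕜}
    (hT : ∀ f : α → 𝕜, Summable (fun a => ‖f a‖ ^ 2) → ∃ F : β → ℝ, Summable F ∧
      (∀ b, ‖T f b‖ ^ 2 ≤ F b) ∧ ∑' b, F b ≤ B * ∑' a, ‖f a‖ ^ 2) :
    L2Bounded (Real.sqrt B) T := by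
  intro f hf
  obtain ⟨F, hF, hTF, hFB⟩ := hT f hf
  have hTf : Summable fun b => ‖T f b‖ ^ 2 := .of_nonneg_of_le (fun _ => sq_nonneg _) hTF hF
  refine ⟨hTf, ?_⟩
  rw [← Real.sqrt_mul hB]
  exact Real.sqrt_le_sqrt ((hTf.tsum_le_tsum hTF hF).trans hFB)

lemma l2Bounded_mul_comp {c : β → 𝕜} {φ : β → α} {π : β → γ} {g : γ → ℝ}
    (hinj : Function.Injective fun b => (π b, φ b)) (hg0 : ∀ l, 0 ≤ g l) (hg : Summable g)
    (hcg : ∀ b, ‖c b‖ ^ 2 ≤ g (π b)) :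
    L2Bounded (Real.sqrt (∑' l, g l)) fun f b => c b * f (φ b) := by
  refine l2Bounded_sqrt_of_forall_le (tsum_nonneg hg0) fun f hf => ?_
  have hprod : Summable fun p : γ × α => g p.1 * ‖f p.2‖ ^ 2 :=
    hg.mul_of_nonneg hf hg0 fun _ => sq_nonneg _
  have hcomp : Summable fun b => g (π b) * ‖f (φ b)‖ ^ 2 := hprod.comp_injective hinj
  refine ⟨fun b => g (π b) * ‖f (φ b)‖ ^ 2, hcomp, fun b => ?_, ?_⟩
  · rw [norm_mul, mul_pow]
    exact mul_le_mul_of_nonneg_right (hcg b) (sq_nonneg _)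
  · calc ∑' b, g (π b) * ‖f (φ b)‖ ^ 2 ≤ ∑' p : γ × α, g p.1 * ‖f p.2‖ ^ 2 :=
          tsum_comp_le_tsum_of_inj (f := fun p : γ × α => g p.1 * ‖f p.2‖ ^ 2) hprod
            (fun p => mul_nonneg (hg0 p.1) (sq_nonneg _)) hinj
      _ = (∑' l, g l) * ∑' a, ‖f a‖ ^ 2 := (hg.tsum_mul_tsum hf hprod).symm

lemma l2Bounded_tsum_mul_comp {c : β → γ → 𝕜} {Φ : β × γ → α} {g : γ → ℝ}
    (hinj : Function.Injective Φ) (hg0 : ∀ l, 0 ≤ g l) (hg : Summable g)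
    (hcg : ∀ b l, ‖c b l‖ ^ 2 ≤ g l) :
    L2Bounded (Real.sqrt (∑' l, g l)) fun f b => ∑' l, c b l * f (Φ (b, l)) := by
  refine l2Bounded_sqrt_of_forall_le (tsum_nonneg hg0) fun f hf => ?_
  have hΦ : Summable fun p : β × γ => ‖f (Φ p)‖ ^ 2 := hf.comp_injective hinj
  refine ⟨fun b => (∑' l, g l) * ∑' l, ‖f (Φ (b, l))‖ ^ 2, hΦ.prod.mul_left _, fun b => ?_, ?_⟩
  · exact norm_tsum_mul_sq_le hg (hcg b) (hΦ.prod_factor b)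
  · rw [tsum_mul_left, ← hΦ.tsum_prod]
    exact mul_le_mul_of_nonneg_left
      (tsum_comp_le_tsum_of_inj hf (fun _ => sq_nonneg _) hinj) (tsum_nonneg hg0)

end L2Bounded

section Vertex

variable {d : ℕ}

lemma dotw_sq_le (w : Fin d → ℝ) (p : ZLat d) : dotw w p ^ 2 ≤ (∑ i, w i ^ 2) * nsq p :=
  Finset.sum_mul_sq_le_sq_mul_sq _ _ _

lemma cutNorm_zero : cutNorm d 0 = 0 := by
  simp [cutNorm, eN, sN, nsq]

lemma abs_apply_le_cutNorm (l : ZLat d) (i : Fin d) : |(l i : ℝ)| ≤ cutNorm d l := by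
  unfold cutNorm
  split_ifs
  · exact Real.abs_le_sqrt (sq_apply_le_nsq l i)
  · rw [← Int.cast_abs, ← Nat.cast_natAbs, sN, Nat.cast_le]
    exact Finset.le_sup (f := fun i => (l i).natAbs) (Finset.mem_univ i)

lemma Jind_eq_zero_or {ε : ℝ} (hε : 0 < ε) (l m : ZLat d) :
    Jind d ε l m = 0 ∨
      Jind d ε l m = 1 ∧ l ∈ puncturedCube d ⌊1 / ε⌋₊ ∧ l + m ≠ 0 := by
  unfold Jind
  split_ifs with h
  · obtain ⟨hl, hl', -, -, hlm, -⟩ := h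
    refine .inr ⟨rfl, mem_puncturedCube.2 ⟨?_, fun i => ?_⟩, ?_⟩
    · rintro rfl
      simp [cutNorm_zero] at hl
    · rw [Int.abs_eq_natAbs, Nat.cast_le]
      refine Nat.le_floor ((le_div_iff₀' hε).2 (le_trans ?_ hl'))
      rw [Nat.cast_natAbs, Int.cast_abs]
      exact mul_le_mul_of_nonneg_left (abs_apply_le_cutNorm l i) hε.le
    · intro h0
      simp [h0, cutNorm_zero] at hlm
  · exact .inl rfl

/-- The factor contributed to `T^{ε,δ,±}` by a vertex joining the frequencies `l`, `m` and `l + m`.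
The total squared frequency `|k_{1:n}|²` is `X` on the side of `l` and `m`, and `Y` on the side
of `l + m`; this makes one kernel serve both creation and annihilation. -/
def vertexKernel (w : Fin d → ℝ) (ε δ : ℝ) (l m : ZLat d) (X Y : ℝ) : ℝ :=
  (X / 2) ^ (-(1 + δ) / 2) *
    (ε ^ ((d : ℝ) / 2) * |2 * ε⁻¹ * dotw w (l + m) / (2 * Real.pi) ^ ((d : ℝ) / 2)| ^ (1 + δ) *
      Jind d ε l m) *
    (Y / 2) ^ (-(1 + δ) / 2)

/-- The constant in the bound of `vertexKernel²` by the density `ε^d |ε l|^{-2(1+δ)}`. One factor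
`4` comes from `|2 w·p|²`, the other from the halves in the two factors `(-L₀)^{-(1+δ)/2}`. -/
def vertexConst (w : Fin d → ℝ) (δ : ℝ) : ℝ :=
  (16 * (∑ i, w i ^ 2) / (2 * Real.pi) ^ d) ^ (1 + δ)

/-- The majorant of `vertexKernel²` as a function of `l` alone, a multiple of the Riemann-sum
density `ε^d |ε l|^{-2(1+δ)}` on `0 < |ε l|_∞ ≤ 1`. -/
def vertexMajorant (w : Fin d → ℝ) (ε δ : ℝ) : ZLat d → ℝ :=
  Set.indicator (puncturedCube d ⌊1 / ε⌋₊) fun l =>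
    vertexConst w δ * (ε ^ ((d : ℝ) - 2 * (1 + δ)) * nsq l ^ (-(1 + δ)))

lemma vertexConst_nonneg (w : Fin d → ℝ) (δ : ℝ) : 0 ≤ vertexConst w δ := by
  unfold vertexConst
  positivity

lemma vertexMajorant_nonneg (w : Fin d → ℝ) {ε : ℝ} (hε : 0 < ε) (δ : ℝ) (l : ZLat d) :
    0 ≤ vertexMajorant w ε δ l :=
  Set.indicator_nonneg (fun l _ => mul_nonneg (vertexConst_nonneg w δ)
    (mul_nonneg (by positivity) (Real.rpow_nonneg (nsq_nonneg l) _))) l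

lemma summable_vertexMajorant (w : Fin d → ℝ) (ε δ : ℝ) : Summable (vertexMajorant w ε δ) :=
  summable_of_hasFiniteSupport
    ((puncturedCube d _).finite_toSet.subset Set.support_indicator_subset)

lemma tsum_vertexMajorant_le (w : Fin d → ℝ) {ε δ : ℝ} (hε : 0 < ε) (hδ0 : -1 ≤ δ)
    (hδ : 2 * (1 + δ) < d) :
    ∑' l, vertexMajorant w ε δ l ≤ vertexConst w δ * (1 + 2 / (1 - 2 * (1 + δ) / d)) ^ d := by
  unfold vertexMajorant
  rw [← sum_eq_tsum_indicator, ← Finset.mul_sum, ← Finset.mul_sum]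
  exact mul_le_mul_of_nonneg_left (rpow_mul_sum_puncturedCube_le (by linarith) hδ hε)
    (vertexConst_nonneg w δ)

lemma vertexKernel_sq (w : Fin d → ℝ) {ε X Y : ℝ} (hε : 0 < ε) (hX : 0 ≤ X) (hY : 0 ≤ Y) (δ : ℝ)
    (l m : ZLat d) :
    vertexKernel w ε δ l m X Y ^ 2 =
      ε ^ (d : ℝ) * (16 * dotw w (l + m) ^ 2 / (2 * Real.pi) ^ d * (ε ^ 2)⁻¹ * (X * Y)⁻¹) ^ (1 + δ)
        * Jind d ε l m ^ 2 := by
  have sq_rpow_neg_half (x : ℝ) (hx : 0 ≤ x) : (x ^ (-(1 + δ) / 2)) ^ 2 = x⁻¹ ^ (1 + δ) := by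
    rw [← Real.rpow_mul_natCast hx, Real.inv_rpow hx, ← Real.rpow_neg hx]
    congr 1
    push_cast
    ring
  have sq_rpow_half (x : ℝ) (hx : 0 ≤ x) : (x ^ ((d : ℝ) / 2)) ^ 2 = x ^ (d : ℝ) := by
    rw [← Real.rpow_mul_natCast hx]
    congr 1
    push_cast
    ring
  rw [vertexKernel, mul_pow, mul_pow, mul_pow, mul_pow,
    sq_rpow_neg_half _ (by positivity), sq_rpow_neg_half _ (by positivity),
    sq_rpow_half _ hε.le, Real.rpow_pow_comm (abs_nonneg _), sq_abs, div_pow,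
    sq_rpow_half _ (by positivity), Real.rpow_natCast (2 * Real.pi)]
  have hbase : 16 * dotw w (l + m) ^ 2 / (2 * Real.pi) ^ d * (ε ^ 2)⁻¹ * (X * Y)⁻¹ =
      (X / 2)⁻¹ * ((2 * ε⁻¹ * dotw w (l + m)) ^ 2 / (2 * Real.pi) ^ d) * (Y / 2)⁻¹ := by
    rw [mul_inv, inv_div, inv_div]
    ring
  rw [hbase, Real.mul_rpow (by positivity) (by positivity),
    Real.mul_rpow (by positivity) (by positivity)]
  ring

lemma vertexKernel_sq_le_vertexMajorant (w : Fin d → ℝ) {ε δ : ℝ} (hε : 0 < ε) (hδ : -1 ≤ δ)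
    {l m : ZLat d} {X Y : ℝ} (hX : nsq l ≤ X) (hY : nsq (l + m) ≤ Y) :
    vertexKernel w ε δ l m X Y ^ 2 ≤ vertexMajorant w ε δ l := by
  have hδ' : 0 ≤ 1 + δ := by linarith
  rcases Jind_eq_zero_or hε l m with hJ | ⟨hJ, hl, hp⟩
  · simpa [vertexKernel, hJ] using vertexMajorant_nonneg w hε δ l
  have hl0 : 0 < nsq l := one_pos.trans_le (one_le_nsq (mem_puncturedCube.1 hl).1)
  have hp0 : 0 < nsq (l + m) := one_pos.trans_le (one_le_nsq hp)
  have hX0 : 0 < X := hl0.trans_le hX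
  have hY0 : 0 < Y := hp0.trans_le hY
  have hbase : 16 * dotw w (l + m) ^ 2 / (2 * Real.pi) ^ d * (ε ^ 2)⁻¹ * (X * Y)⁻¹ ≤
      16 * (∑ i, w i ^ 2) / (2 * Real.pi) ^ d * (ε ^ 2)⁻¹ * (nsq l)⁻¹ := by
    calc _ ≤ 16 * ((∑ i, w i ^ 2) * nsq (l + m)) / (2 * Real.pi) ^ d * (ε ^ 2)⁻¹ *
          (nsq l * nsq (l + m))⁻¹ := by
          gcongr
          exact dotw_sq_le w _
      _ = _ := by field_simp
  rw [vertexKernel_sq w hε hX0.le hY0.le, hJ, one_pow, mul_one,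
    vertexMajorant, Set.indicator_of_mem (Finset.mem_coe.2 hl)]
  calc _ ≤ ε ^ (d : ℝ) *
        (16 * (∑ i, w i ^ 2) / (2 * Real.pi) ^ d * (ε ^ 2)⁻¹ * (nsq l)⁻¹) ^ (1 + δ) := by
        gcongr
    _ = vertexConst w δ * (ε ^ (d : ℝ) * (ε ^ 2)⁻¹ ^ (1 + δ) * (nsq l)⁻¹ ^ (1 + δ)) := by
        rw [Real.mul_rpow (by positivity) (by positivity),
          Real.mul_rpow (by positivity) (by positivity), vertexConst]
        ring
    _ = vertexConst w δ * (ε ^ ((d : ℝ) - 2 * (1 + δ)) * nsq l ^ (-(1 + δ))) := by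
        rw [Real.rpow_sub hε, Real.rpow_mul hε.le, Real.rpow_two, Real.rpow_neg hl0.le,
          Real.inv_rpow hl0.le, Real.inv_rpow (by positivity), ← div_eq_mul_inv (ε ^ (d : ℝ))]

end Vertex

section LabelledOperators

variable {d n : ℕ}

lemma nsq_le_wSq (k : Fin n → ZLat d) (a : Fin n) : nsq (k a) ≤ wSq k :=
  Finset.single_le_sum (f := fun a => nsq (k a)) (fun _ _ => nsq_nonneg _) (Finset.mem_univ a)

/-- The configuration at which `A^{ε,δ}_+[(i,j)]` evaluates the kernel: the frequencies `k i` and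
`k j` are merged into their sum, which is moved to the front. -/
def mergeAt (i j : Fin (n + 2)) (h : i < j) (k : Fin (n + 2) → ZLat d) : Fin (n + 1) → ZLat d :=
  Fin.cons (k i + k j) (remove2 k i j h)

/-- The configuration at which `A^{ε,δ}_−[q]` evaluates the kernel: the frequency `p.1 q` is split
into `p.2` and `p.1 q - p.2`, which are moved to the front. -/
def splitAt (q : Fin (n + 1)) (p : (Fin (n + 1) → ZLat d) × ZLat d) : Fin (n + 2) → ZLat d :=
  Fin.cons p.2 (Fin.cons (p.1 q - p.2) fun a => p.1 (q.succAbove a))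

lemma eq_of_remove2_eq {X : Type*} {i j : Fin (n + 2)} (h : i < j) {k k' : Fin (n + 2) → X}
    (hi : k i = k' i) (hj : k j = k' j) (hrest : remove2 k i j h = remove2 k' i j h) : k = k' := by
  funext x
  rcases eq_or_ne x j with rfl | hxj
  · exact hj
  obtain ⟨y, rfl⟩ := Fin.exists_succAbove_eq hxj
  set i' : Fin (n + 1) := i.castLT (h.trans_le j.le_last)
  rcases eq_or_ne y i' with rfl | hy
  · have hji : j.succAbove i' = i := Fin.succAbove_of_castSucc_lt j i' h
    rw [hji, hi]
  · obtain ⟨z, rfl⟩ := Fin.exists_succAbove_eq hy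
    exact congrFun hrest z

lemma injective_apply_prod_mergeAt (i j : Fin (n + 2)) (h : i < j) :
    Function.Injective fun k : Fin (n + 2) → ZLat d => (k i, mergeAt i j h k) := by
  intro k k' hk
  obtain ⟨hi, hmerge⟩ := Prod.mk.inj hk
  obtain ⟨hsum, hrest⟩ := Fin.cons_inj.1 hmerge
  rw [hi] at hsum
  exact eq_of_remove2_eq h hi (add_left_cancel hsum) hrest

lemma splitAt_injective (q : Fin (n + 1)) : Function.Injective (splitAt (d := d) q) := by
  rintro ⟨k, l⟩ ⟨k', l'⟩ hk
  obtain ⟨rfl, htail⟩ := Fin.cons_inj.1 hk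
  obtain ⟨hq, hrest⟩ := Fin.cons_inj.1 htail
  refine Prod.ext (funext fun x => ?_) rfl
  rcases eq_or_ne x q with rfl | hx
  · exact sub_left_injective hq
  · obtain ⟨y, rfl⟩ := Fin.exists_succAbove_eq hx
    exact congrFun hrest y

lemma TplusD_apply (w : Fin d → ℝ) (ε δ : ℝ) (i j : Fin (n + 2)) (h : i < j)
    (f : Chaos d (n + 1)) (k : Fin (n + 2) → ZLat d) :
    TplusD d w ε δ i j h f k =
      (vertexKernel w ε δ (k i) (k j) (wSq k) (wSq (mergeAt i j h k)) : ℂ) *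
        f (mergeAt i j h k) := by
  simp only [TplusD, AplusD, negPow, vertexKernel, mergeAt]
  push_cast
  ring

lemma TminusD_apply (w : Fin d → ℝ) (ε δ : ℝ) (q : Fin (n + 1)) (f : Chaos d (n + 2))
    (k : Fin (n + 1) → ZLat d) :
    TminusD d w ε δ q f k =
      ∑' l, (vertexKernel w ε δ l (k q - l) (wSq (splitAt q (k, l))) (wSq k) : ℂ) *
        f (splitAt q (k, l)) := by
  simp only [TminusD, AminusD, negPow, vertexKernel, splitAt, ← tsum_mul_left, add_sub_cancel]
  refine tsum_congr fun l => ?_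
  push_cast
  ring

lemma l2Bounded_TplusD (w : Fin d → ℝ) {ε δ : ℝ} (hε : 0 < ε) (hδ : -1 ≤ δ) (i j : Fin (n + 2))
    (h : i < j) :
    L2Bounded (Real.sqrt (∑' l, vertexMajorant w ε δ l)) (TplusD d w ε δ i j h) := by
  rw [show TplusD d w ε δ i j h = _ from funext₂ (TplusD_apply w ε δ i j h)]
  refine l2Bounded_mul_comp (injective_apply_prod_mergeAt i j h) (vertexMajorant_nonneg w hε δ)
    (summable_vertexMajorant w ε δ) fun k => ?_
  rw [Complex.norm_real, Real.norm_eq_abs, sq_abs]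
  exact vertexKernel_sq_le_vertexMajorant w hε hδ (nsq_le_wSq k i) (nsq_le_wSq (mergeAt i j h k) 0)

lemma l2Bounded_TminusD (w : Fin d → ℝ) {ε δ : ℝ} (hε : 0 < ε) (hδ : -1 ≤ δ) (q : Fin (n + 1)) :
    L2Bounded (Real.sqrt (∑' l, vertexMajorant w ε δ l)) (TminusD d w ε δ q) := by
  rw [show TminusD d w ε δ q = _ from funext₂ (TminusD_apply w ε δ q)]
  refine l2Bounded_tsum_mul_comp (splitAt_injective q) (vertexMajorant_nonneg w hε δ)
    (summable_vertexMajorant w ε δ) fun k l => ?_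
  rw [Complex.norm_real, Real.norm_eq_abs, sq_abs]
  refine vertexKernel_sq_le_vertexMajorant w hε hδ (nsq_le_wSq (splitAt q (k, l)) 0) ?_
  rw [add_sub_cancel]
  exact nsq_le_wSq k q

end LabelledOperators

theorem stmt12_general (d : ℕ) (w : Fin d → ℝ) (δ : ℝ) (hδ0 : -1 ≤ δ)
    (hδ : δ < ((d : ℝ) - 2) / 2) :
    ∃ C : ℝ, 0 < C ∧ ∀ ε : ℝ, 0 < ε →
      (∀ (n : ℕ) (i j : Fin (n + 2)) (h : i < j), L2Bounded C (TplusD d w ε δ i j h)) ∧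
      (∀ (n : ℕ) (q : Fin (n + 1)), L2Bounded C (TminusD d w ε δ q)) := by
  set B := vertexConst w δ * (1 + 2 / (1 - 2 * (1 + δ) / d)) ^ d
  have hC {ε : ℝ} (hε : 0 < ε) : Real.sqrt (∑' l, vertexMajorant w ε δ l) ≤ Real.sqrt B + 1 :=
    (Real.sqrt_le_sqrt (tsum_vertexMajorant_le w hε hδ0 (by linarith))).trans (by linarith)
  exact ⟨Real.sqrt B + 1, by positivity, fun ε hε =>
    ⟨fun n i j h => (l2Bounded_TplusD w hε hδ0 i j h).mono (hC hε),
      fun n q => (l2Bounded_TminusD w hε hδ0 q).mono (hC hε)⟩⟩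

/-- uniform bounds for the labelled, `δ`-weighted creation and
annihilation operators, `d ≥ 3`.  Here `L²_n → L²_{n+1}` is realised as
`Chaos d (n+1) → Chaos d (n+2)` (and `L²_n → L²_{n−1}` as
`Chaos d (n+2) → Chaos d (n+1)`), and `ε` runs over `(0,1)` with `1/ε ∈ ℕ + 1/2`. -/
theorem stmt12 (d : ℕ) (hd : 3 ≤ d) (w : Fin d → ℝ) (hw : w ≠ 0)
    (δ : ℝ) (hδ0 : 0 ≤ δ) (hδ : δ < ((d:ℝ)-2)/2) :
    ∃ C : ℝ, 0 < C ∧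
      ∀ ε : ℝ, 0 < ε → ε < 1 → (∃ N : ℕ, 1/ε = (N:ℝ) + 1/2) →
      (∀ (n : ℕ) (i j : Fin (n+2)) (h : i < j) (f : Chaos d (n+1)),
        SuppOk f → Summable (fun k => ‖f k‖^2) →
        Summable (fun k => ‖TplusD d w ε δ i j h f k‖^2) ∧
        Real.sqrt (l2Sq (TplusD d w ε δ i j h f)) ≤ C * Real.sqrt (l2Sq f)) ∧
      (∀ (n : ℕ) (q : Fin (n+1)) (f : Chaos d (n+2)),
        SuppOk f → Summable (fun k => ‖f k‖^2) →
        Summable (fun k => ‖TminusD d w ε δ q f k‖^2) ∧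
        Real.sqrt (l2Sq (TminusD d w ε δ q f)) ≤ C * Real.sqrt (l2Sq f)) := by
  obtain ⟨C, hC, hbound⟩ := stmt12_general d w δ (by linarith) hδ
  exact ⟨C, hC, fun ε hε _ _ => ⟨fun n i j h f _ => (hbound ε hε).1 n i j h f,
    fun n q f _ => (hbound ε hε).2 n q f⟩⟩

end SBE
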